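/- arXiv:math/0007136 — 3 statements merged into one kernel-verified Lean document; each statement's English description precedes it below -/
import Mathlib

section
/- (Lemma A, stronger version.) Let R be a commutative ring, let m ≥ 1, and for each j = 0, 1, ..., m-1 let p_j ∈ R[X] be a polynomial of degree at most j, with a_j denoting the coefficient of X^j in p_j. For each i = 1, ..., m let l_i ≥ 0 be an integer and let b_{1,i}, ..., b_{l_i,i} ∈ R and x_{1,i}, ..., x_{l_i,i} ∈ R be given. Then the determinant of the m×m matrix whose (i,j) entry is Σ_{k=1}^{l_i} b_{k,i} · p_{j-1}(x_{k,i}) equals (a_0 · a_1 · ... · a_{m-1}) times the determinant of the m×m matrix whose (i,j) entry is Σ_{k=1}^{l_i} b_{k,i} · x_{k,i}^{j-1}. -/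
/-! The entries in row `i` are the values at the `p j` of one linear functional
`φ i q = ∑ k, b i k * q(x i k)`. Expanding `p j` in powers of `X` factors the matrix
`(φ i (p j))` as `(φ i (X ^ t))` times the matrix of coefficients of the `p j`, and the latter
is upper triangular. -/

open Polynomial

theorem linearMap_apply_eq_sum_coeff_smul {R M : Type*} [Semiring R] [AddCommMonoid M] [Module R M]
    (φ : R[X] →ₗ[R] M) {q : R[X]} {n : ℕ} (hq : q.natDegree < n) :
    φ q = ∑ t : Fin n, q.coeff t • φ (X ^ (t : ℕ)) := by
  conv_lhs => rw [q.as_sum_range' n hq, Finset.sum_range]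
  simp only [map_sum, ← smul_X_eq_monomial, map_smul]

theorem det_of_coeff_eq_prod_coeff {R : Type*} [CommRing R] {m : ℕ} (p : Fin m → R[X])
    (hdeg : ∀ j, (p j).natDegree ≤ j) :
    (Matrix.of fun t j : Fin m => (p j).coeff t).det = ∏ j, (p j).coeff j :=
  Matrix.det_of_isUpperTriangular (Matrix.matrixOfPolynomials_blockTriangular p hdeg)

theorem of_linearMap_eq_mul_map_coeff {R A ι κ : Type*} [CommSemiring R] [CommSemiring A]
    [Algebra R A] {n : ℕ} (φ : ι → R[X] →ₗ[R] A) (p : κ → R[X])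
    (hdeg : ∀ j, (p j).natDegree < n) :
    (Matrix.of fun i j => φ i (p j)) =
      (Matrix.of fun i (t : Fin n) => φ i (X ^ (t : ℕ))) *
        (Matrix.of fun (t : Fin n) j => (p j).coeff t).map (algebraMap R A) := by
  ext i j
  simp only [Matrix.of_apply, Matrix.mul_apply, Matrix.map_apply,
    linearMap_apply_eq_sum_coeff_smul (φ i) (hdeg j), Algebra.smul_def, mul_comm]

theorem lemmaA_strong_general {R A : Type*} [CommRing R] [CommRing A] [Algebra R A] {m : ℕ}
    (φ : Fin m → R[X] →ₗ[R] A) (p : Fin m → R[X]) (hdeg : ∀ j, (p j).natDegree ≤ j) :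
    (Matrix.of fun i j => φ i (p j)).det =
      (∏ j, (p j).coeff j) • (Matrix.of fun i j : Fin m => φ i (X ^ (j : ℕ))).det := by
  rw [of_linearMap_eq_mul_map_coeff φ p fun j => (hdeg j).trans_lt j.isLt, Matrix.det_mul,
    ← RingHom.mapMatrix_apply, ← RingHom.map_det, det_of_coeff_eq_prod_coeff p hdeg, mul_comm,
    Algebra.smul_def]

/-- Lemma A (stronger version): if `p 0, …, p (m-1)` are polynomials with `deg (p j) ≤ j`,
and `a j` is the coefficient of `X^j` in `p j`, then for any coefficients `b k i` and points
`x k i`,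
`det (∑ k, b k i · p (j-1) (x k i))_{i,j} = (a 0 ⋯ a (m-1)) · det (∑ k, b k i · x k i ^ (j-1))_{i,j}`. -/
theorem lemmaA_strong (R : Type*) [CommRing R] (m : ℕ) (hm : 1 ≤ m)
    (p : Fin m → Polynomial R) (hdeg : ∀ j, (p j).degree ≤ (j : ℕ))
    (l : Fin m → ℕ) (b : (i : Fin m) → Fin (l i) → R) (x : (i : Fin m) → Fin (l i) → R) :
    (Matrix.of fun i j : Fin m => ∑ k : Fin (l i), b i k * (p j).eval (x i k)).det
      = (∏ j : Fin m, (p j).coeff j) *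
        (Matrix.of fun i j : Fin m => ∑ k : Fin (l i), b i k * x i k ^ (j : ℕ)).det := by
  simpa using lemmaA_strong_general (fun i => ∑ k, b i k • leval (x i k)) p
    fun j => natDegree_le_of_degree_le (hdeg j)
end

section
/- Let n ≥ 1 and 1 ≤ m ≤ n+1 be integers, and for 0 ≤ k ≤ n let a_k be the coefficient of x^k in the polynomial (x-1)^{m-1} · (x+1)^{n-m+1}. Then: (i) for every integer j with 0 ≤ j ≤ m-2, one has Σ_{k=0}^{n} a_k · (k+1)^j = 0; and (ii) for every integer j with 0 ≤ j ≤ n-m, one has Σ_{k=0}^{n} a_k · (-1)^k · (k+1)^j = 0. -/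
/-!
If `c` is a root of `p` of multiplicity at least `r`, then the Euler operator `X d/dX` lowers this
multiplicity by at most one, so fewer than `r` applications still leave a root at `c`. As `X d/dX`
multiplies the coefficient of `X ^ k` by `k`, evaluating at `c` shows that `k ↦ p.coeff k * c ^ k`
is orthogonal to `k ↦ k ^ j` for every `j < r`, hence to every polynomial in `k` of degree below
`r`. Here `c = 1` and `c = -1` are roots of multiplicity at least `m - 1` and `n + 1 - m`.
-/

open Polynomial

section EulerOperator

variable {R : Type*} [CommSemiring R]

/-- The Euler operator `X d/dX` on polynomials, whose eigenvectors are the monomials. It turns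
weighting the coefficients of a polynomial by powers of the index into differentiation. -/
noncomputable def eulerOperator (p : R[X]) : R[X] :=
  X * derivative p

theorem coeff_eulerOperator (p : R[X]) (k : ℕ) :
    (eulerOperator p).coeff k = p.coeff k * k := by
  cases k with
  | zero => simp [eulerOperator]
  | succ k => simp [eulerOperator, coeff_X_mul, coeff_derivative]

theorem coeff_iterate_eulerOperator (p : R[X]) (j k : ℕ) :
    (eulerOperator^[j] p).coeff k = p.coeff k * (k : R) ^ j := by
  induction j with
  | zero => simp
  | succ j ih => rw [Function.iterate_succ_apply', coeff_eulerOperator, ih, pow_succ, mul_assoc]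

theorem natDegree_iterate_eulerOperator_le (p : R[X]) (j : ℕ) :
    (eulerOperator^[j] p).natDegree ≤ p.natDegree := by
  refine natDegree_le_iff_coeff_eq_zero.mpr fun k hk ↦ ?_
  rw [coeff_iterate_eulerOperator, coeff_eq_zero_of_natDegree_lt hk, zero_mul]

theorem pow_sub_dvd_iterate_eulerOperator_of_pow_dvd {p q : R[X]} {r : ℕ} (hdvd : q ^ r ∣ p)
    (j : ℕ) : q ^ (r - j) ∣ eulerOperator^[j] p := by
  induction j with
  | zero => exact hdvd
  | succ j ih =>
    rw [Function.iterate_succ_apply', ← Nat.sub_sub]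
    exact (pow_sub_one_dvd_derivative_of_pow_dvd ih).mul_left X

end EulerOperator

section MultipleRoot

variable {R : Type*} [CommRing R] {p : R[X]} {c : R} {r N : ℕ}

theorem sum_coeff_mul_pow_mul_natCast_pow_eq_zero (hroot : (X - C c) ^ r ∣ p)
    (hp : p.natDegree < N) {j : ℕ} (hj : j < r) :
    ∑ k ∈ Finset.range N, p.coeff k * c ^ k * (k : R) ^ j = 0 := by
  have hdvd : X - C c ∣ eulerOperator^[j] p :=
    (dvd_pow_self _ (Nat.sub_ne_zero_of_lt hj)).trans
      (pow_sub_dvd_iterate_eulerOperator_of_pow_dvd hroot j)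
  calc
    ∑ k ∈ Finset.range N, p.coeff k * c ^ k * (k : R) ^ j
      = ∑ k ∈ Finset.range N, (eulerOperator^[j] p).coeff k * c ^ k := by
        simp only [coeff_iterate_eulerOperator, mul_right_comm]
    _ = (eulerOperator^[j] p).eval c :=
        (eval_eq_sum_range' ((natDegree_iterate_eulerOperator_le p j).trans_lt hp) c).symm
    _ = 0 := dvd_iff_isRoot.mp hdvd

theorem sum_coeff_mul_pow_mul_eval_natCast_eq_zero (hroot : (X - C c) ^ r ∣ p)
    (hp : p.natDegree < N) {q : R[X]} (hq : q.natDegree < r) :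
    ∑ k ∈ Finset.range N, p.coeff k * c ^ k * q.eval (k : R) = 0 := by
  calc
    ∑ k ∈ Finset.range N, p.coeff k * c ^ k * q.eval (k : R)
      = ∑ j ∈ Finset.range r, q.coeff j *
          ∑ k ∈ Finset.range N, p.coeff k * c ^ k * (k : R) ^ j := by
        simp only [eval_eq_sum_range' hq, Finset.mul_sum, mul_left_comm]
        exact Finset.sum_comm
    _ = 0 := Finset.sum_eq_zero fun j hj ↦ by
        rw [sum_coeff_mul_pow_mul_natCast_pow_eq_zero hroot hp (Finset.mem_range.mp hj), mul_zero]

end MultipleRoot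

theorem natDegree_X_sub_one_pow_mul_X_add_one_pow_le {R : Type*} [Ring R] (r s : ℕ) :
    ((X - 1) ^ r * (X + 1) ^ s : R[X]).natDegree ≤ r + s := by
  compute_degree

theorem coeff_orthogonality_general {R : Type*} [CommRing R] (r s : ℕ) :
    (∀ q : R[X], q.natDegree < r →
        ∑ k ∈ Finset.range (r + s + 1),
          ((X - 1) ^ r * (X + 1) ^ s : R[X]).coeff k * q.eval (k : R) = 0) ∧
    (∀ q : R[X], q.natDegree < s →
        ∑ k ∈ Finset.range (r + s + 1),
          ((X - 1) ^ r * (X + 1) ^ s : R[X]).coeff k * (-1) ^ k * q.eval (k : R) = 0) := by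
  have hdeg := Nat.lt_succ_of_le (natDegree_X_sub_one_pow_mul_X_add_one_pow_le (R := R) r s)
  have hone : (X - C 1) ^ r ∣ ((X - 1) ^ r * (X + 1) ^ s : R[X]) := by
    rw [C_1]
    exact dvd_mul_right _ _
  have hneg_one : (X - C (-1)) ^ s ∣ ((X - 1) ^ r * (X + 1) ^ s : R[X]) := by
    rw [C_neg, C_1, sub_neg_eq_add]
    exact dvd_mul_left _ _
  constructor
  · intro q hq
    simpa only [one_pow, mul_one] using sum_coeff_mul_pow_mul_eval_natCast_eq_zero hone hdeg hq
  · intro q hq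
    exact sum_coeff_mul_pow_mul_eval_natCast_eq_zero hneg_one hdeg hq

/-- Let `a k` be the coefficient of `x^k` in `(x-1)^(m-1) (x+1)^(n-m+1)`. Then
`∑_{k=0}^n a k (k+1)^j = 0` for `0 ≤ j ≤ m-2`, and
`∑_{k=0}^n a k (-1)^k (k+1)^j = 0` for `0 ≤ j ≤ n-m`. -/
theorem coeff_orthogonality (n m : ℕ) (hn : 1 ≤ n) (hm : 1 ≤ m) (hmn : m ≤ n + 1)
    (a : ℕ → ℤ)
    (ha : ∀ k, a k =
      ((Polynomial.X - 1) ^ (m - 1) * (Polynomial.X + 1) ^ (n + 1 - m) :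
        Polynomial ℤ).coeff k) :
    (∀ j : ℕ, (j : ℤ) ≤ (m : ℤ) - 2 →
        ∑ k ∈ Finset.range (n + 1), a k * ((k : ℤ) + 1) ^ j = 0) ∧
    (∀ j : ℕ, (j : ℤ) ≤ (n : ℤ) - (m : ℤ) →
        ∑ k ∈ Finset.range (n + 1), a k * (-1) ^ k * ((k : ℤ) + 1) ^ j = 0) := by
  have hdeg (j : ℕ) : ((X + 1 : ℤ[X]) ^ j).natDegree = j := natDegree_pow_X_add_C j 1
  have h := coeff_orthogonality_general (R := ℤ) (m - 1) (n + 1 - m)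
  simp only [show m - 1 + (n + 1 - m) = n by omega, ← ha] at h
  exact ⟨fun j hj ↦ by simpa using h.1 ((X + 1) ^ j) ((hdeg j).trans_lt (by omega)),
    fun j hj ↦ by simpa using h.2 ((X + 1) ^ j) ((hdeg j).trans_lt (by omega))⟩
end

section
/- (Block Laplace expansion with alternating column signs.) Let R be a commutative ring, let m_1, m_2 ≥ 0 be integers, let c be an (m_1+m_2)×m_1 matrix and d an (m_1+m_2)×m_2 matrix over R, and let b be the (m_1+m_2)×(m_1+m_2) matrix with b_{i,j} = c_{i,j} for 1 ≤ j ≤ m_1 and b_{i,j} = (-1)^{i-1} · d_{i, j-m_1} for m_1 < j ≤ m_1+m_2. Then det b = (-1)^{⌊(m_1+m_2)/2⌋ - ⌊m_1/2⌋} · Σ det(c_{x_i, j})_{i,j=1,...,m_1} · det(d_{y_i, j})_{i,j=1,...,m_2}, where the sum is over all partitions of {1, 2, ..., m_1+m_2} into two sets {x_1, ..., x_{m_1}} and {y_1, ..., y_{m_2}} with x_1 < x_2 < ... < x_{m_1} and y_1 < y_2 < ... < y_{m_2}. -/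
open scoped Classical

/-!
Choose for each set `s` of rows an enumeration `e s` of `s` followed by its complement. Every
permutation of the rows is `e s` preceded by a permutation inside each of the two column blocks,
for exactly one `s`; grouping the Leibniz formula accordingly is the Laplace expansion. With
increasing enumerations `x` of `s` and `y` of `sᶜ`, there are `m₁ + j - y j` (0-based) elements of
`s` above `y j`, so the sign `(-1) ^ ∑ (m₁ + j - y j)` of `e s` and the row signs `(-1) ^ y j`
multiply to `∏ (-1) ^ (m₁ + j)`, which does not depend on `s`.
-/

open Equiv Equiv.Perm Finset

lemma sum_dite_zero {ι M : Type*} [Fintype ι] [AddCommMonoid M] {p : ι → Prop} [DecidablePred p]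
    (f : ∀ i, p i → M) :
    ∑ i, (if h : p i then f i h else 0) = ∑ i : {i // p i}, f i i.2 := by
  rw [← Fintype.sum_subtype_add_sum_subtype p,
    sum_eq_zero (fun (i : {i // ¬p i}) _ => dif_neg i.2), add_zero]
  exact sum_congr rfl fun i _ => dif_pos i.2

section Laplace

variable {m n α : Type*} [Fintype m]

lemma bijective_sumCongr_trans [Finite n] {k : ℕ} (hk : Fintype.card m = k)
    (e : {s : Finset α // #s = k} → m ⊕ n ≃ α)
    (he : ∀ s, Set.range (e s ∘ Sum.inl) = (s.1 : Set α)) :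
    Function.Bijective fun x : {s : Finset α // #s = k} × Perm m × Perm n =>
      (x.2.1.sumCongr x.2.2).trans (e x.1) := by
  have range_inl (s) (p : Perm m) (q : Perm n) :
      Set.range ((p.sumCongr q).trans (e s) ∘ Sum.inl) = (s.1 : Set α) := by
    rw [← he s, ← p.surjective.range_comp (e s ∘ Sum.inl)]
    rfl
  constructor
  · rintro ⟨s, p, q⟩ ⟨t, p', q'⟩ h
    obtain rfl : s = t := by
      rw [Subtype.ext_iff, ← coe_inj, ← range_inl s p q, ← range_inl t p' q']
      exact congrArg (fun f : m ⊕ n ≃ α => Set.range (f ∘ Sum.inl)) h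
    have hpq : sumCongrHom m n (p, q) = sumCongrHom m n (p', q') :=
      Equiv.ext fun x => (e s).injective (DFunLike.congr_fun h x)
    rw [sumCongrHom_injective hpq]
  · intro f
    let s : {s : Finset α // #s = k} :=
      ⟨univ.map (Function.Embedding.inl.trans f.toEmbedding), by simp [hk]⟩
    have hfs : Set.MapsTo (f.trans (e s).symm) (Set.range Sum.inl) (Set.range Sum.inl) := by
      rintro _ ⟨i, rfl⟩
      obtain ⟨i', hi'⟩ : f (Sum.inl i) ∈ Set.range (e s ∘ Sum.inl) := by simp [he, s]
      exact ⟨i', by simp [← hi']⟩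
    obtain ⟨⟨p, q⟩, hpq⟩ := mem_sumCongrHom_range_of_perm_mapsTo_inl hfs
    refine ⟨(s, p, q), Equiv.ext fun x => ?_⟩
    simpa using congrArg (e s) (DFunLike.congr_fun hpq x)

variable [Fintype n] [Fintype α] [DecidableEq m] [DecidableEq n] [DecidableEq α]

lemma sign_symm_trans_sumCongr_trans (r e : m ⊕ n ≃ α) (p : Perm m) (q : Perm n) :
    sign (r.symm.trans ((p.sumCongr q).trans e)) = sign (r.symm.trans e) * (sign p * sign q) := by
  have hfactor : r.symm.trans ((p.sumCongr q).trans e) =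
      r.symm.trans e * (r.symm.trans (p.sumCongr q)).trans r := by
    ext
    simp
  rw [hfactor, Perm.sign_mul, sign_symm_trans_trans, sign_sumCongr]

variable {R : Type*} [CommRing R]

lemma sum_perm_prod_eq_sign_mul_det_mul_det (A : Matrix α α R) (r e : m ⊕ n ≃ α) :
    ∑ x : Perm m × Perm n,
        ((sign (r.symm.trans ((x.1.sumCongr x.2).trans e)) : ℤ) : R) *
          ∏ a, A (r.symm.trans ((x.1.sumCongr x.2).trans e) a) a =
      ((sign (r.symm.trans e) : ℤ) : R) *
        ((A.submatrix (e ∘ Sum.inl) (r ∘ Sum.inl)).det *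
          (A.submatrix (e ∘ Sum.inr) (r ∘ Sum.inr)).det) := by
  rw [Matrix.det_apply', Matrix.det_apply', sum_mul_sum, ← Fintype.sum_prod_type', mul_sum]
  refine sum_congr rfl fun x _ => ?_
  rw [← r.prod_comp, Fintype.prod_sum_type, sign_symm_trans_sumCongr_trans]
  simp only [trans_apply, symm_apply_apply, Perm.sumCongr_apply, Sum.map_inl, Sum.map_inr,
    Matrix.submatrix_apply, Function.comp_apply]
  push_cast
  ring

theorem det_eq_sum_sign_mul_det_mul_det (A : Matrix α α R) {k : ℕ} (hk : Fintype.card m = k)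
    (r : m ⊕ n ≃ α) (e : {s : Finset α // #s = k} → m ⊕ n ≃ α)
    (he : ∀ s, Set.range (e s ∘ Sum.inl) = (s.1 : Set α)) :
    A.det = ∑ s, ((sign (r.symm.trans (e s)) : ℤ) : R) *
      ((A.submatrix (e s ∘ Sum.inl) (r ∘ Sum.inl)).det *
        (A.submatrix (e s ∘ Sum.inr) (r ∘ Sum.inr)).det) := by
  have hbij : Function.Bijective fun x : {s : Finset α // #s = k} × Perm m × Perm n =>
      r.symm.trans ((x.2.1.sumCongr x.2.2).trans (e x.1)) :=
    (r.equivCongr (Equiv.refl α)).bijective.comp (bijective_sumCongr_trans hk e he)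
  simp_rw [← sum_perm_prod_eq_sign_mul_det_mul_det]
  rw [Matrix.det_apply', ← hbij.sum_comp, Fintype.sum_prod_type]

end Laplace

section Sign

variable {m n : ℕ}

lemma prod_Iio_natAdd {M : Type*} [CommMonoid M] (f : Fin (m + n) → M) (j : Fin n) :
    ∏ k ∈ Iio (Fin.natAdd m j), f k =
      (∏ i, f (Fin.castAdd n i)) * ∏ k ∈ Iio j, f (Fin.natAdd m k) := by
  have hcast (i : Fin m) : Fin.castAdd n i < Fin.natAdd m j := by
    simp only [Fin.lt_def, Fin.val_castAdd, Fin.val_natAdd]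
    omega
  simp only [← filter_gt_eq_Iio, prod_filter, Fin.prod_univ_add, hcast, if_true,
    Fin.natAdd_lt_natAdd_iff]

lemma sign_eq_prod_neg_one_pow_card_of_strictMono {σ : Perm (Fin (m + n))}
    (hleft : StrictMono (σ ∘ Fin.castAdd n)) (hright : StrictMono (σ ∘ Fin.natAdd m)) :
    sign σ = ∏ j : Fin n, (-1) ^ #{i | ¬ σ (Fin.castAdd n i) < σ (Fin.natAdd m j)} := by
  rw [sign_eq_prod_prod_Iio, Fin.prod_univ_add]
  have hleft_eq_one (j : Fin m) : (∏ i ∈ Iio (Fin.castAdd n j),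
      if σ i < σ (Fin.castAdd n j) then 1 else -1) = (1 : ℤˣ) := by
    rw [Fin.prod_Iio_castAdd]
    exact prod_eq_one fun i hi => if_pos (hleft (mem_Iio.mp hi))
  have hright_eq_one (j : Fin n) : (∏ k ∈ Iio j,
      if σ (Fin.natAdd m k) < σ (Fin.natAdd m j) then 1 else -1) = (1 : ℤˣ) :=
    prod_eq_one fun k hk => if_pos (hright (mem_Iio.mp hk))
  simp only [hleft_eq_one, prod_Iio_natAdd, hright_eq_one, prod_const_one, one_mul, mul_one]
  simp only [prod_ite, prod_const_one, prod_const, one_mul]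

lemma card_not_lt_add_val_of_strictMono {σ : Perm (Fin (m + n))}
    (hright : StrictMono (σ ∘ Fin.natAdd m)) (j : Fin n) :
    #{i | ¬ σ (Fin.castAdd n i) < σ (Fin.natAdd m j)} + (σ (Fin.natAdd m j) : ℕ) = m + j := by
  have hbelow : #{k | σ (Fin.natAdd m k) < σ (Fin.natAdd m j)} = (j : ℕ) := by
    simp only [← Fin.card_Iio j, ← filter_gt_eq_Iio]
    exact congrArg card (filter_congr fun k _ => hright.lt_iff_lt)
  have hval : (σ (Fin.natAdd m j) : ℕ) =
      #{i | σ (Fin.castAdd n i) < σ (Fin.natAdd m j)} +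
        #{k | σ (Fin.natAdd m k) < σ (Fin.natAdd m j)} := by
    simp only [← Fin.card_Iio (σ (Fin.natAdd m j)), ← filter_gt_eq_Iio, card_filter]
    rw [← Equiv.sum_comp σ, Fin.sum_univ_add]
  have hsplit := card_filter_add_card_filter_not (s := (univ : Finset (Fin m)))
    (fun i => σ (Fin.castAdd n i) < σ (Fin.natAdd m j))
  rw [card_univ, Fintype.card_fin] at hsplit
  omega

lemma prod_neg_one_pow_add_val {M : Type*} [CommMonoid M] [HasDistribNeg M] (a n : ℕ) :
    ∏ j : Fin n, (-1 : M) ^ (a + (j : ℕ)) = (-1) ^ ((a + n) / 2 - a / 2) := by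
  induction n with
  | zero => simp
  | succ n ih =>
    simp only [Fin.prod_univ_castSucc, Fin.val_castSucc, Fin.val_last, ih]
    rcases Nat.even_or_odd (a + n) with heven | hodd
    · rw [heven.neg_one_pow, mul_one]
      congr 1
      grind
    · rw [hodd.neg_one_pow, mul_neg_one, ← neg_one_mul, ← pow_succ']
      congr 1
      grind

lemma sign_mul_prod_neg_one_pow_of_strictMono {σ : Perm (Fin (m + n))}
    (hleft : StrictMono (σ ∘ Fin.castAdd n)) (hright : StrictMono (σ ∘ Fin.natAdd m)) :
    sign σ * ∏ j, (-1) ^ (σ (Fin.natAdd m j) : ℕ) = (-1) ^ ((m + n) / 2 - m / 2) := by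
  simp only [sign_eq_prod_neg_one_pow_card_of_strictMono hleft hright, ← prod_mul_distrib,
    ← pow_add, card_not_lt_add_val_of_strictMono hright, prod_neg_one_pow_add_val]

lemma sign_finSumEquivOfFinset_mul_prod_neg_one_pow (R : Type*) [CommRing R]
    {s : Finset (Fin (m + n))} (hs : #s = m) (hsc : #sᶜ = n) :
    ((sign (finSumFinEquiv.symm.trans (finSumEquivOfFinset hs hsc)) : ℤ) : R) *
      ∏ j, (-1) ^ (sᶜ.orderEmbOfFin hsc j : ℕ) = (-1) ^ ((m + n) / 2 - m / 2) := by
  have hsign := sign_mul_prod_neg_one_pow_of_strictMono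
    (σ := finSumFinEquiv.symm.trans (finSumEquivOfFinset hs hsc))
    (fun i j hij => by simpa using hij) (fun i j hij => by simpa using hij)
  simpa using congrArg (fun u : ℤˣ => ((u : ℤ) : R)) hsign

end Sign

/-- Block Laplace expansion with alternating column signs: if `b` agrees with `c` in its
first `m₁` columns and with `d`, with row `i` scaled by `(-1)^(i-1)`, in its last `m₂`
columns, then `det b` equals `(-1)^(⌊(m₁+m₂)/2⌋ - ⌊m₁/2⌋)` times the sum, over all
partitions of the rows into an increasing `m₁`-subset `s` and its complement, of
`det (c restricted to rows s) · det (d restricted to rows sᶜ)`. -/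
theorem block_laplace_alternating (R : Type*) [CommRing R] (m₁ m₂ : ℕ)
    (c : Matrix (Fin (m₁ + m₂)) (Fin m₁) R) (d : Matrix (Fin (m₁ + m₂)) (Fin m₂) R)
    (b : Matrix (Fin (m₁ + m₂)) (Fin (m₁ + m₂)) R)
    (hb : ∀ i j, b i j =
      if h : (j : ℕ) < m₁ then c i ⟨(j : ℕ), h⟩
      else (-1 : R) ^ (i : ℕ) * d i ⟨(j : ℕ) - m₁, by have := j.isLt; omega⟩) :
    b.det = (-1 : R) ^ ((m₁ + m₂) / 2 - m₁ / 2) *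
      ∑ s : Finset (Fin (m₁ + m₂)),
        (if h : s.card = m₁ then
          (Matrix.of fun i j : Fin m₁ => c (s.orderEmbOfFin h i) j).det *
          (Matrix.of fun i j : Fin m₂ =>
            d (sᶜ.orderEmbOfFin
                (by rw [Finset.card_compl, h, Fintype.card_fin]; omega) i) j).det
         else 0) := by
  have hcompl (s : {s : Finset (Fin (m₁ + m₂)) // #s = m₁}) : #s.1ᶜ = m₂ := by
    rw [card_compl, s.2, Fintype.card_fin]
    omega
  rw [sum_dite_zero, mul_sum,
    det_eq_sum_sign_mul_det_mul_det b (Fintype.card_fin m₁) finSumFinEquiv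
      (fun s => finSumEquivOfFinset s.2 (hcompl s)) (fun s => range_orderEmbOfFin s.1 s.2)]
  refine sum_congr rfl fun s _ => ?_
  have hleft : b.submatrix (finSumEquivOfFinset s.2 (hcompl s) ∘ Sum.inl)
      (finSumFinEquiv ∘ Sum.inl) = Matrix.of fun i j => c (s.1.orderEmbOfFin s.2 i) j :=
    Matrix.ext fun i j => by simp [hb]
  have hright : (b.submatrix (finSumEquivOfFinset s.2 (hcompl s) ∘ Sum.inr)
      (finSumFinEquiv ∘ Sum.inr)).det =
        (∏ j, (-1) ^ (s.1ᶜ.orderEmbOfFin (hcompl s) j : ℕ)) *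
          (Matrix.of fun i j => d (s.1ᶜ.orderEmbOfFin (hcompl s) i) j).det := by
    rw [← Matrix.det_mul_column]
    exact congrArg Matrix.det (Matrix.ext fun i j => by simp [hb])
  rw [hleft, hright, ← sign_finSumEquivOfFinset_mul_prod_neg_one_pow R s.2 (hcompl s)]
  ring
end
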